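/- arXiv:1306.5348 — 9 statements merged into one kernel-verified Lean document; each statement's English description precedes it below -/
import Mathlib

section
/- Let A be an associative unital algebra over a field k of prime characteristic p, and let u ∈ A with (u − 1)^p = 0. Then the truncated logarithm L(u) is p-nilpotent: L(u)^p = 0. -/
/-- The truncated logarithm `L(u) = ∑_{i=1}^{p-1} ((-1)^{i+1}/i) (u-1)^i`. -/
noncomputable def truncLog (k : Type*) [Field k] {A : Type*} [Ring A] [Algebra k A]
    (p : ℕ) (u : A) : A :=
  ∑ i ∈ Finset.Icc 1 (p - 1), (((-1 : k) ^ (i + 1)) / (i : k)) • (u - 1) ^ i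

/-- The truncated logarithm of a `p`-unipotent element is `p`-nilpotent. -/
theorem truncLog_nilpotent {k A : Type*} [Field k] [Ring A] [Algebra k A]
    (p : ℕ) [Fact p.Prime] [CharP k p] (u : A) (hu : (u - 1) ^ p = 0) :
    (truncLog k p u) ^ p = 0 := by
  -- Every exponent in the sum is at least `1`, so `L(u) = (u - 1) * w` with `w` a polynomial
  -- in `u - 1`; the two factors commute, hence `L(u) ^ p = (u - 1) ^ p * w ^ p`.
  have hfac : truncLog k p u = (u - 1) *
      ∑ i ∈ Finset.Icc 1 (p - 1), (((-1 : k) ^ (i + 1)) / (i : k)) • (u - 1) ^ (i - 1) := by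
    rw [truncLog, Finset.mul_sum]
    refine Finset.sum_congr rfl fun i hi => ?_
    rw [mul_smul_comm, mul_pow_sub_one (by have := (Finset.mem_Icc.mp hi).1; omega)]
  have hcomm : Commute (u - 1)
      (∑ i ∈ Finset.Icc 1 (p - 1), (((-1 : k) ^ (i + 1)) / (i : k)) • (u - 1) ^ (i - 1)) :=
    Commute.sum_right _ _ _ fun i _ => (Commute.self_pow (u - 1) (i - 1)).smul_right _
  rw [hfac, hcomm.mul_pow, hu, zero_mul]
end

section
/- Let A be an associative unital algebra over a field k of prime characteristic p, and let x ∈ A with x^p = 0. Then L(E(x)) = x, where E is the truncated exponential and L the truncated logarithm. -/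
/-!
The identity is the evaluation at `x` of a congruence in `k[X]`: writing `e` for the truncated
exponential of `X` and `l = L(e)`, one has `l ≡ X` modulo `X ^ p`.

The congruence follows by differentiating. Since `e' = e - X ^ (p - 1) / (p - 1)!`, a geometric
sum gives `l' = (∑_{j < p - 1} (1 - e) ^ j) e' ≡ 1 - (1 - e) ^ (p - 1) ≡ 1` modulo `X ^ (p - 1)`,
because `X` divides `1 - e`. So `l - X` has zero constant term and a derivative divisible by
`X ^ (p - 1)`; as `1, …, p - 1` are invertible in `k`, its coefficients below degree `p` vanish.
-/

/-- The truncated exponential `E(x) = ∑_{i=0}^{p-1} (1/i!) x^i`. -/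
noncomputable def truncExp (k : Type*) [Field k] {A : Type*} [Ring A] [Algebra k A]
    (p : ℕ) (x : A) : A :=
  ∑ i ∈ Finset.range p, ((Nat.factorial i : k))⁻¹ • x ^ i


open Polynomial in
/-- A primitive of a multiple of `X ^ (p - 1)` without constant term is a multiple of `X ^ p`: the
coefficients in degrees `1, …, p - 1` are recovered from the derivative because these integers are
invertible in `k`. -/
lemma X_pow_dvd_of_X_pow_dvd_derivative {k : Type*} [Field k] (p : ℕ) [CharP k p]
    (f : k[X]) (h0 : X ∣ f) (hf : X ^ (p - 1) ∣ derivative f) : X ^ p ∣ f := by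
  rw [X_pow_dvd_iff] at hf ⊢
  intro d hd
  rcases d with _ | d
  · exact X_dvd_iff.mp h0
  · have h := hf d (by omega)
    rw [coeff_derivative] at h
    refine (mul_eq_zero.mp h).resolve_right fun h' => ?_
    have h'' : ((d + 1 : ℕ) : k) = 0 := by exact_mod_cast h'
    rw [CharP.cast_eq_zero_iff k p] at h''
    exact absurd (Nat.le_of_dvd d.succ_pos h'') (by omega)

open Polynomial in
lemma X_dvd_truncExp_sub_one {k : Type*} [Field k] (p : ℕ) [Fact p.Prime] :
    (X : k[X]) ∣ truncExp k p (X : k[X]) - 1 := by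
  obtain ⟨n, rfl⟩ : ∃ n, p = n + 1 := Nat.exists_eq_succ_of_ne_zero (Fact.out : p.Prime).ne_zero
  rw [truncExp, Finset.sum_range_succ']
  simp only [Nat.factorial_zero, Nat.cast_one, inv_one, pow_zero, one_smul, add_sub_cancel_right]
  exact Finset.dvd_sum fun i _ => (dvd_pow_self X i.succ_ne_zero).trans (by rw [smul_eq_C_mul]; exact dvd_mul_left _ _)

open Polynomial in
lemma derivative_truncExp {k : Type*} [Field k] (p : ℕ) [Fact p.Prime] [CharP k p] :
    derivative (truncExp k p (X : k[X])) =
      truncExp k p (X : k[X]) - ((Nat.factorial (p - 1) : k))⁻¹ • X ^ (p - 1) := by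
  obtain ⟨n, rfl⟩ : ∃ n, p = n + 1 := Nat.exists_eq_succ_of_ne_zero (Fact.out : p.Prime).ne_zero
  rw [truncExp, derivative_sum, Finset.sum_range_succ']
  simp only [Finset.sum_range_succ, Nat.add_sub_cancel, add_sub_cancel_right]
  simp only [derivative_smul, derivative_X_pow, pow_zero, derivative_one, smul_zero, add_zero,
    Nat.add_sub_cancel]
  refine Finset.sum_congr rfl fun i hi => ?_
  have h : ((i + 1 : ℕ) : k) ≠ 0 := by
    rw [Ne, CharP.cast_eq_zero_iff k (n + 1)]
    intro h
    have := Nat.le_of_dvd i.succ_pos h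
    have := Finset.mem_range.mp hi
    omega
  rw [← smul_eq_C_mul, smul_smul, Nat.factorial_succ, Nat.cast_mul, mul_inv_rev,
    inv_mul_cancel_right₀ h]

open Polynomial in
/-- The logarithmic derivative of `u`, with `1 / u` replaced by a truncated geometric series. -/
lemma derivative_truncLog {k : Type*} [Field k] (p : ℕ) [CharP k p] (u : k[X]) :
    derivative (truncLog k p u) = (∑ j ∈ Finset.range (p - 1), (1 - u) ^ j) * derivative u := by
  have hIcc : Finset.Icc 1 (p - 1) = Finset.Ico (0 + 1) (p - 1 + 1) := by
    ext; simp
  rw [truncLog, derivative_sum, Finset.sum_mul, Finset.range_eq_Ico, hIcc,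
    ← Finset.sum_Ico_add']
  refine Finset.sum_congr rfl fun j hj => ?_
  have h : ((j + 1 : ℕ) : k) ≠ 0 := by
    rw [Ne, CharP.cast_eq_zero_iff k p]
    intro h
    have := Nat.le_of_dvd j.succ_pos h
    have := Finset.mem_Ico.mp hj
    omega
  rw [derivative_smul, derivative_pow, derivative_sub, derivative_one, sub_zero,
    Nat.add_sub_cancel, mul_assoc, ← smul_eq_C_mul, smul_smul, div_mul_cancel₀ _ h,
    ← neg_sub u 1, neg_pow (u - 1), pow_add, pow_add, smul_eq_C_mul]
  simp [mul_assoc]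

open Polynomial in
/-- The congruence `L(E(X)) ≡ X` modulo `X ^ p`. -/
lemma X_pow_dvd_truncLog_truncExp_sub {k : Type*} [Field k] (p : ℕ) [Fact p.Prime] [CharP k p] :
    (X : k[X]) ^ p ∣ truncLog k p (truncExp k p (X : k[X])) - X := by
  have hX := X_dvd_truncExp_sub_one (k := k) p
  apply X_pow_dvd_of_X_pow_dvd_derivative p
  · refine dvd_sub (Finset.dvd_sum fun i hi => dvd_smul_of_dvd _ ?_) dvd_rfl
    exact hX.trans (dvd_pow_self _ (by have := Finset.mem_Icc.mp hi; omega))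
  · rw [derivative_sub, derivative_truncLog, derivative_truncExp, derivative_X]
    set e := truncExp k p (X : k[X])
    have hgeom := mul_neg_geom_sum (1 - e) (p - 1)
    rw [sub_sub_cancel] at hgeom
    rw [mul_sub, mul_comm _ e, hgeom, sub_right_comm, sub_sub_cancel_left]
    refine dvd_sub ((dvd_neg.mpr (pow_dvd_pow_of_dvd ?_ _))) ?_
    · exact (dvd_sub_comm).mp hX
    · exact (dvd_smul_of_dvd _ dvd_rfl).mul_left _

/-- `L(E(x)) = x` for `p`-nilpotent `x`. -/
theorem truncLog_truncExp {k A : Type*} [Field k] [Ring A] [Algebra k A]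
    (p : ℕ) [Fact p.Prime] [CharP k p] (x : A) (hx : x ^ p = 0) :
    truncLog k p (truncExp k p x) = x := by
  obtain ⟨q, hq⟩ := X_pow_dvd_truncLog_truncExp_sub (k := k) p
  have h := congrArg (Polynomial.aeval x) hq
  simpa [truncLog, truncExp, hx, sub_eq_zero] using h
end

section
/- Let A be an associative unital algebra over a field k of prime characteristic p, and let u ∈ A with (u − 1)^p = 0. Then E(L(u)) = u, where E is the truncated exponential and L the truncated logarithm. -/
lemma map_truncExp {k A B : Type*} [Field k] [Ring A] [Algebra k A] [Ring B] [Algebra k B]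
    (f : A →ₐ[k] B) (p : ℕ) (x : A) : f (truncExp k p x) = truncExp k p (f x) := by
  simp [truncExp]

lemma map_truncLog {k A B : Type*} [Field k] [Ring A] [Algebra k A] [Ring B] [Algebra k B]
    (f : A →ₐ[k] B) (p : ℕ) (x : A) : f (truncLog k p x) = truncLog k p (f x) := by
  simp [truncLog]

open Polynomial in
lemma X_dvd_truncLog {k : Type*} [Field k] (p : ℕ) : (X : k[X]) ∣ truncLog k p (1 + X : k[X]) := by
  unfold truncLog
  refine Finset.dvd_sum fun i hi => ?_
  rw [add_sub_cancel_left]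
  exact dvd_smul_of_dvd _ (dvd_pow_self X (by have := (Finset.mem_Icc.1 hi).1; omega))

open Polynomial in
/-- The truncated form of `(1 + X) (log (1 + X))' = 1`. -/
lemma one_add_X_mul_derivative_truncLog {k : Type*} [Field k] (m : ℕ)
    (hm : ∀ n < m, ((n + 1 : ℕ) : k) ≠ 0) :
    (1 + X) * derivative (truncLog k (m + 1) (1 + X : k[X])) = 1 - (-X) ^ m := by
  have h : derivative (truncLog k (m + 1) (1 + X : k[X])) = ∑ i ∈ Finset.range m, (-X) ^ i := by
    rw [truncLog, Nat.add_sub_cancel, ← Finset.Ico_add_one_right_eq_Icc, Finset.sum_Ico_eq_sum_range,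
      derivative_sum]
    refine Finset.sum_congr (by simp) fun i hi => ?_
    have hi' : i < m := by simpa using hi
    have hc : ((-1 : k) ^ (1 + i + 1) / ((1 + i : ℕ) : k)) * ((i + 1 : ℕ) : k) = (-1) ^ i := by
      rw [add_comm 1 i, div_mul_cancel₀ _ (hm i hi')]
      ring
    rw [add_sub_cancel_left, derivative_smul, add_comm 1 i, derivative_X_pow, smul_eq_C_mul,
      ← mul_assoc, ← C_mul, Nat.add_sub_cancel]
    rw [add_comm 1 i] at hc
    rw [hc, neg_pow (X : k[X]) i]
    simp
  rw [h, ← mul_neg_geom_sum]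
  ring

open Polynomial in
/-- The truncated form of `(exp f)' = exp f * f'`: differentiation drops the top term. -/
lemma derivative_truncExp_s9 {k : Type*} [Field k] (m : ℕ)
    (hm : ∀ n < m, ((n + 1 : ℕ) : k) ≠ 0) (f : k[X]) :
    derivative (truncExp k (m + 1) f) = truncExp k m f * derivative f := by
  rw [truncExp, Finset.sum_range_succ', derivative_add, derivative_sum, truncExp, Finset.sum_mul]
  simp only [pow_zero, derivative_smul, derivative_one, smul_zero, add_zero]
  refine Finset.sum_congr rfl fun i hi => ?_
  have h0 := hm i (by simpa using hi)
  have hc : ((Nat.factorial (i + 1) : ℕ) : k)⁻¹ * ((i + 1 : ℕ) : k) = ((Nat.factorial i : ℕ) : k)⁻¹ := by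
    rw [Nat.factorial_succ, Nat.cast_mul, mul_inv, mul_comm, ← mul_assoc, mul_inv_cancel₀ h0, one_mul]
  rw [derivative_pow_succ, ← hc]
  simp only [smul_eq_C_mul, C_mul]
  push_cast
  simp
  ring

open Polynomial in
/-- The universal case of the theorem, `E(L(1 + X)) ≡ 1 + X` modulo `X ^ p`, with `p = m + 1`.
Of the prime characteristic only the invertibility of `1, …, p - 1` matters. -/
lemma X_pow_dvd_truncExp_truncLog {k : Type*} [Field k] (m : ℕ)
    (hm : ∀ n < m, ((n + 1 : ℕ) : k) ≠ 0) :
    (X : k[X]) ^ (m + 1) ∣ truncExp k (m + 1) (truncLog k (m + 1) (1 + X : k[X])) - (1 + X) := by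
  have hℓ := X_dvd_truncLog (k := k) (m + 1)
  have hd := one_add_X_mul_derivative_truncLog m hm
  set ℓ := truncLog k (m + 1) (1 + X : k[X]) with hℓdef
  set G := truncExp k (m + 1) ℓ - (1 + X) with hG
  have hE : truncExp k (m + 1) ℓ = truncExp k m ℓ + ((Nat.factorial m : ℕ) : k)⁻¹ • ℓ ^ m := by
    rw [truncExp, Finset.sum_range_succ, truncExp]
  have hode : (X : k[X]) ^ m ∣ (1 + X) * derivative G - G := by
    have : (1 + X) * derivative G - G
        = -(truncExp k m ℓ * (-X) ^ m) - ((Nat.factorial m : ℕ) : k)⁻¹ • ℓ ^ m := by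
      have h1 : derivative G = truncExp k m ℓ * derivative ℓ - 1 := by
        rw [hG, derivative_sub, derivative_truncExp_s9 m hm]
        simp
      rw [h1, hG, hE]
      linear_combination truncExp k m ℓ * hd
    rw [this]
    refine dvd_sub (dvd_neg.2 (Dvd.dvd.mul_left ?_ _)) (dvd_smul_of_dvd _ (pow_dvd_pow_of_dvd hℓ m))
    exact pow_dvd_pow_of_dvd (dvd_neg.2 dvd_rfl) m
  rw [X_pow_dvd_iff] at hode ⊢
  intro n
  induction n with
  | zero =>
    intro _
    have h0 : ℓ.eval 0 = 0 := by
      rw [← coeff_zero_eq_eval_zero]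
      exact X_dvd_iff.1 hℓ
    rw [coeff_zero_eq_eval_zero, hG, truncExp, Finset.sum_range_succ']
    simp [eval_finsetSum, h0]
  | succ n ih =>
    intro hn
    have h := hode n (by omega)
    have hc : (X * derivative G).coeff n = G.coeff n * n := by
      cases n with
      | zero => simp
      | succ j => rw [coeff_X_mul, coeff_derivative]; push_cast; rfl
    rw [coeff_sub, add_mul, one_mul, coeff_add, hc, coeff_derivative, ih (by omega)] at h
    have h' : G.coeff (n + 1) * ((n + 1 : ℕ) : k) = 0 := by
      push_cast
      linear_combination h
    exact (mul_eq_zero.1 h').resolve_right (hm n (by omega))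

/-- `E(L(u)) = u` for `p`-unipotent `u`. -/
theorem truncExp_truncLog {k A : Type*} [Field k] [Ring A] [Algebra k A]
    (p : ℕ) [Fact p.Prime] [CharP k p] (u : A) (hu : (u - 1) ^ p = 0) :
    truncExp k p (truncLog k p u) = u := by
  obtain ⟨m, rfl⟩ : ∃ m, p = m + 1 :=
    ⟨p - 1, (Nat.succ_pred_prime Fact.out).symm⟩
  have hm : ∀ n < m, ((n + 1 : ℕ) : k) ≠ 0 := fun n hn h =>
    absurd (Nat.le_of_dvd n.succ_pos ((CharP.cast_eq_zero_iff k (m + 1) _).1 h)) (by omega)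
  obtain ⟨q, hq⟩ := X_pow_dvd_truncExp_truncLog m hm
  have h := congrArg (Polynomial.aeval (R := k) (u - 1)) hq
  rw [map_sub, map_truncExp, map_truncLog, map_mul, map_pow, Polynomial.aeval_X, hu, zero_mul,
    map_add, map_one, Polynomial.aeval_X, add_sub_cancel] at h
  exact sub_eq_zero.1 h
end

section
/- Let A be an associative unital algebra over a field k of prime characteristic p. The truncated exponential E restricts to a bijection from the set {x ∈ A : x^p = 0} of p-nilpotent elements onto the set {u ∈ A : (u − 1)^p = 0} of p-unipotent elements, with inverse given by the truncated logarithm L. (This is the GL_n instance of the unique equivariant bijection exp : N_1(g) → U_1(G) of Theorem 3.4.) -/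
open Polynomial

/-- The truncated exponential series as a polynomial. -/
noncomputable def expPoly (k : Type*) [Field k] (p : ℕ) : k[X] :=
  ∑ i ∈ Finset.range p, C ((Nat.factorial i : k))⁻¹ * X ^ i

/-- The truncated series of `log (1 + X)` as a polynomial. -/
noncomputable def logPoly (k : Type*) [Field k] (p : ℕ) : k[X] :=
  ∑ i ∈ Finset.Icc 1 (p - 1), C (((-1 : k) ^ (i + 1)) / (i : k)) * X ^ i

lemma truncExp_eq_aeval {k A : Type*} [Field k] [Ring A] [Algebra k A] (p : ℕ) (x : A) :
    truncExp k p x = aeval x (expPoly k p) := by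
  simp [truncExp, expPoly, Algebra.smul_def]

lemma truncLog_eq_aeval {k A : Type*} [Field k] [Ring A] [Algebra k A] (p : ℕ) (u : A) :
    truncLog k p u = aeval (u - 1) (logPoly k p) := by
  simp only [truncLog, logPoly, Algebra.smul_def, map_sum, map_mul, aeval_C, map_pow, aeval_X]

section

variable {k : Type*} [Field k] (p : ℕ)

lemma natCast_ne_zero_of_lt [CharP k p] {n : ℕ} (h0 : n ≠ 0) (h : n < p) : (n : k) ≠ 0 := by
  rw [Ne, CharP.cast_eq_zero_iff k p]
  exact fun hd => absurd (Nat.le_of_dvd (Nat.pos_of_ne_zero h0) hd) (not_le.mpr h)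

/-- A formal solution of `(1 + c X) P' = c P` up to order `p - 1` with `P(0) = 0` vanishes up to
order `p`. -/
lemma X_pow_dvd_of_ode [CharP k p] (c : k) (P : k[X]) (h0 : P.coeff 0 = 0)
    (h : (X : k[X]) ^ (p - 1) ∣ (1 + C c * X) * derivative P - C c * P) : X ^ p ∣ P := by
  rw [X_pow_dvd_iff] at h ⊢
  intro d
  induction d with
  | zero => exact fun _ => h0
  | succ n ih =>
    intro hn
    have hPn := ih (by omega)
    have hc := h n (by omega)
    have hX : (X * derivative P).coeff n = P.coeff n * n := by
      cases n with
      | zero => simp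
      | succ m => rw [coeff_X_mul, coeff_derivative]; push_cast; ring
    rw [add_mul, one_mul, mul_assoc, coeff_sub, coeff_add, coeff_C_mul, coeff_C_mul, hX, hPn,
      coeff_derivative] at hc
    have hne : ((n + 1 : ℕ) : k) ≠ 0 := natCast_ne_zero_of_lt p n.succ_ne_zero hn
    push_cast at hne
    simpa [hne] using hc

lemma X_dvd_logPoly : (X : k[X]) ∣ logPoly k p := by
  refine Finset.dvd_sum fun i hi => Dvd.dvd.mul_left (dvd_pow_self X ?_) _
  have := (Finset.mem_Icc.mp hi).1
  omega

lemma one_add_X_mul_derivative_logPoly [CharP k p] :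
    (1 + X) * derivative (logPoly k p) = 1 - (-X) ^ (p - 1) := by
  have h : derivative (logPoly k p) = ∑ i ∈ Finset.range (p - 1), (-X : k[X]) ^ i := by
    rw [logPoly, derivative_sum, Finset.range_eq_Ico,
      ← Finset.Ico_add_one_right_eq_Icc, ← Finset.sum_Ico_add' _ 0 (p - 1) 1]
    refine Finset.sum_congr rfl fun i hi => ?_
    have hi := (Finset.mem_Ico.mp hi).2
    have hne : ((i + 1 : ℕ) : k) ≠ 0 := natCast_ne_zero_of_lt p i.succ_ne_zero (by omega)
    rw [derivative_C_mul_X_pow, Nat.add_sub_cancel, div_mul_cancel₀ _ hne, neg_pow (X : k[X])]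
    simp [pow_succ]
  rw [h, ← mul_neg_geom_sum, sub_neg_eq_add]

variable [hp : Fact p.Prime]

lemma X_dvd_expPoly_sub_one : (X : k[X]) ∣ expPoly k p - 1 := by
  obtain ⟨q, rfl⟩ := Nat.exists_eq_succ_of_ne_zero hp.out.ne_zero
  rw [expPoly, Finset.sum_range_succ']
  simp only [Nat.factorial_zero, Nat.cast_one, inv_one, map_one, pow_zero, mul_one,
    add_sub_cancel_right]
  exact Finset.dvd_sum fun i _ => Dvd.dvd.mul_left (dvd_pow_self X i.succ_ne_zero) _

variable [CharP k p]

lemma derivative_expPoly :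
    (X : k[X]) ^ (p - 1) ∣ derivative (expPoly k p) - expPoly k p := by
  obtain ⟨q, rfl⟩ := Nat.exists_eq_succ_of_ne_zero hp.out.ne_zero
  have h : derivative (expPoly k (q + 1)) =
      ∑ i ∈ Finset.range q, C ((Nat.factorial i : k))⁻¹ * X ^ i := by
    rw [expPoly, Finset.sum_range_succ', derivative_add, derivative_sum]
    simp only [pow_zero, mul_one, derivative_C, add_zero]
    refine Finset.sum_congr rfl fun i hi => ?_
    have hne : ((i + 1 : ℕ) : k) ≠ 0 :=
      natCast_ne_zero_of_lt (q + 1) i.succ_ne_zero (by simpa using hi)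
    rw [derivative_C_mul_X_pow, Nat.add_sub_cancel, Nat.factorial_succ]
    congr 2
    rw [Nat.cast_mul, mul_inv]
    field_simp
  rw [Nat.succ_eq_add_one, h, expPoly, Finset.sum_range_succ, sub_add_cancel_left, dvd_neg]
  exact Dvd.intro_left _ rfl

lemma X_pow_dvd_logPoly_comp :
    (X : k[X]) ^ p ∣ (logPoly k p).comp (expPoly k p - 1) - X := by
  have hE := X_dvd_expPoly_sub_one (k := k) p
  apply X_pow_dvd_of_ode p 0
  · rw [← X_dvd_iff]
    refine dvd_sub ?_ dvd_rfl
    obtain ⟨Q, hQ⟩ := X_dvd_logPoly (k := k) p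
    rw [hQ, mul_comp, X_comp]
    exact hE.mul_right _
  · have h1 := congrArg (fun P : k[X] => P.comp (expPoly k p - 1))
      (one_add_X_mul_derivative_logPoly (k := k) p)
    simp only [mul_comp, add_comp, sub_comp, one_comp, X_comp, pow_comp, neg_comp,
      add_sub_cancel] at h1
    have h2 : (X : k[X]) ^ (p - 1) ∣ (-(expPoly k p - 1)) ^ (p - 1) :=
      pow_dvd_pow_of_dvd ((dvd_neg).mpr hE) _
    have h3 := (derivative_expPoly (k := k) p).mul_right
      ((derivative (logPoly k p)).comp (expPoly k p - 1))
    convert dvd_sub h3 h2 using 1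
    simp only [map_zero, zero_mul, add_zero, one_mul, sub_zero, derivative_sub, derivative_X,
      derivative_comp, derivative_one]
    linear_combination h1

lemma X_pow_dvd_expPoly_comp :
    (X : k[X]) ^ p ∣ (expPoly k p).comp (logPoly k p) - (1 + X) := by
  have hL := X_dvd_logPoly (k := k) p
  apply X_pow_dvd_of_ode p 1
  · rw [← X_dvd_iff, ← sub_sub]
    refine dvd_sub ?_ dvd_rfl
    obtain ⟨Q, hQ⟩ := X_dvd_expPoly_sub_one (k := k) p
    have h := congrArg (fun P : k[X] => P.comp (logPoly k p)) hQ
    simp only [sub_comp, one_comp, mul_comp, X_comp] at h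
    rw [h]
    exact hL.mul_right _
  · have h1 := one_add_X_mul_derivative_logPoly (k := k) p
    obtain ⟨R, hR⟩ := derivative_expPoly (k := k) p
    have h2 := congrArg (fun P : k[X] => P.comp (logPoly k p)) hR
    simp only [sub_comp, mul_comp, pow_comp, X_comp] at h2
    have h3 : (X : k[X]) ^ (p - 1) ∣ (logPoly k p) ^ (p - 1) * R.comp (logPoly k p) :=
      (pow_dvd_pow_of_dvd hL _).mul_right _
    have h4 : (X : k[X]) ^ (p - 1) ∣
        (-X) ^ (p - 1) * (derivative (expPoly k p)).comp (logPoly k p) :=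
      (pow_dvd_pow_of_dvd ((dvd_neg).mpr dvd_rfl) _).mul_right _
    convert dvd_sub h3 h4 using 1
    simp only [map_one, one_mul, derivative_sub, derivative_X, derivative_add,
      derivative_comp, derivative_one]
    linear_combination h2 + (derivative (expPoly k p)).comp (logPoly k p) * h1

end

lemma aeval_eq_zero_of_dvd_of_pow {k A : Type*} [Field k] [Ring A] [Algebra k A] {p : ℕ} {x : A}
    (hx : x ^ p = 0) {P : k[X]} (h : X ^ p ∣ P) : aeval x P = 0 := by
  obtain ⟨Q, rfl⟩ := h
  simp [hx]

/-- The truncated exponential is a bijection from `p`-nilpotent elements onto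
`p`-unipotent elements, with inverse the truncated logarithm. -/
theorem truncExp_bijOn {k A : Type*} [Field k] [Ring A] [Algebra k A]
    (p : ℕ) [Fact p.Prime] [CharP k p] :
    Set.BijOn (truncExp k p) {x : A | x ^ p = 0} {u : A | (u - 1) ^ p = 0} ∧
    Set.BijOn (truncLog k p) {u : A | (u - 1) ^ p = 0} {x : A | x ^ p = 0} ∧
    (∀ x ∈ {x : A | x ^ p = 0}, truncLog k p (truncExp k p x) = x) ∧
    (∀ u ∈ {u : A | (u - 1) ^ p = 0}, truncExp k p (truncLog k p u) = u) := by
  have hE : Set.MapsTo (truncExp k p) {x : A | x ^ p = 0} {u : A | (u - 1) ^ p = 0} := by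
    intro x hx
    have h := aeval_eq_zero_of_dvd_of_pow hx
      (pow_dvd_pow_of_dvd (X_dvd_expPoly_sub_one (k := k) p) p)
    simpa [truncExp_eq_aeval] using h
  have hL : Set.MapsTo (truncLog k p) {u : A | (u - 1) ^ p = 0} {x : A | x ^ p = 0} := by
    intro u hu
    have h := aeval_eq_zero_of_dvd_of_pow hu
      (pow_dvd_pow_of_dvd (X_dvd_logPoly (k := k) p) p)
    simpa [truncLog_eq_aeval] using h
  have hLE : ∀ x ∈ {x : A | x ^ p = 0}, truncLog k p (truncExp k p x) = x := by
    intro x hx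
    have h := aeval_eq_zero_of_dvd_of_pow hx (X_pow_dvd_logPoly_comp (k := k) p)
    rw [map_sub, aeval_comp, aeval_X, map_sub, map_one, sub_eq_zero] at h
    rw [truncLog_eq_aeval, truncExp_eq_aeval, h]
  have hEL : ∀ u ∈ {u : A | (u - 1) ^ p = 0}, truncExp k p (truncLog k p u) = u := by
    intro u hu
    have h := aeval_eq_zero_of_dvd_of_pow hu (X_pow_dvd_expPoly_comp (k := k) p)
    rw [map_sub, aeval_comp, map_add, aeval_X, map_one, sub_eq_zero, add_sub_cancel] at h
    rw [truncExp_eq_aeval, truncLog_eq_aeval, h]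
  exact ⟨Set.InvOn.bijOn ⟨hLE, hEL⟩ hE hL, Set.InvOn.bijOn ⟨hEL, hLE⟩ hL hE, hLE, hEL⟩
end

section
/- Let k be a field of prime characteristic p, let n, r ≥ 1, and let X_0, …, X_{r−1} be pairwise commuting n × n matrices over k with X_i^p = 0 for all i. Then the map φ : k → Matrix n n k defined by φ(s) = E(s • X_0) * E(s^p • X_1) * ⋯ * E(s^{p^{r−1}} • X_{r−1}) satisfies φ(s + t) = φ(s) * φ(t) for all s, t ∈ k and φ(0) = 1, with each φ(s) invertible; i.e. an r-tuple of commuting p-nilpotent matrices determines a one-parameter additive subgroup of GL_n(k) (the construction underlying the map E_* of Theorem 2.4, for GL_n). -/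
lemma factorial_cast_ne_zero_of_lt {k : Type*} [Field k] (p : ℕ) [hp : Fact p.Prime] [CharP k p]
    {m : ℕ} (hm : m < p) : (m.factorial : k) ≠ 0 := by
  rw [Ne, CharP.cast_eq_zero_iff k p, hp.out.dvd_factorial]
  omega

/-- The binomial theorem in divided-power form, in degrees below the characteristic. -/
lemma inv_factorial_mul_add_pow {k : Type*} [Field k] (p : ℕ) [Fact p.Prime] [CharP k p]
    {m : ℕ} (hm : m < p) (a b : k) :
    (m.factorial : k)⁻¹ * (a + b) ^ m = ∑ x ∈ Finset.HasAntidiagonal.antidiagonal m,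
      ((x.1.factorial : k)⁻¹ * a ^ x.1) * ((x.2.factorial : k)⁻¹ * b ^ x.2) := by
  rw [(Commute.all a b).add_pow', Finset.mul_sum]
  refine Finset.sum_congr rfl fun x hx => ?_
  obtain ⟨i, j⟩ := x
  rw [Finset.HasAntidiagonal.mem_antidiagonal] at hx
  simp only at hx ⊢
  subst hx
  have hi := factorial_cast_ne_zero_of_lt (k := k) p (m := i) (by omega)
  have hj := factorial_cast_ne_zero_of_lt (k := k) p (m := j) (by omega)
  have hij := factorial_cast_ne_zero_of_lt (k := k) p hm
  have h : ((i + j).choose i : k) * i.factorial * j.factorial = (i + j).factorial := by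
    rw [Nat.choose_symm_add]
    exact_mod_cast congrArg (Nat.cast : ℕ → k) (Nat.add_choose_mul_factorial_mul_factorial i j)
  rw [nsmul_eq_mul]
  field_simp
  rw [← h]
  ring

lemma truncExp_smul {k : Type*} [Field k] {A : Type*} [Ring A] [Algebra k A]
    (p : ℕ) (a : k) (x : A) :
    truncExp k p (a • x) = ∑ i ∈ Finset.range p, ((i.factorial : k)⁻¹ * a ^ i) • x ^ i := by
  simp only [truncExp, smul_pow, smul_smul]

lemma truncExp_zero {k : Type*} [Field k] {A : Type*} [Ring A] [Algebra k A]
    (p : ℕ) [hp : Fact p.Prime] : truncExp k p (0 : A) = 1 := by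
  rw [truncExp, Finset.sum_eq_single_of_mem 0 (Finset.mem_range.2 hp.out.pos)]
  · simp
  · intro i _ hi
    simp [hi]

lemma truncExp_add_smul {k : Type*} [Field k] {A : Type*} [Ring A] [Algebra k A]
    (p : ℕ) [Fact p.Prime] [CharP k p] {x : A} (hx : x ^ p = 0) (a b : k) :
    truncExp k p ((a + b) • x) = truncExp k p (a • x) * truncExp k p (b • x) := by
  simp only [truncExp_smul]
  rw [Finset.sum_mul_sum, ← Finset.sum_product']
  -- The pairs with `i + j ≥ p` contribute zero; the others are grouped by the value of `i + j`.
  rw [← Finset.sum_filter_of_ne (p := fun y : ℕ × ℕ => y.1 + y.2 < p),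
    ← Finset.sum_fiberwise_of_maps_to (t := Finset.range p) (g := fun y : ℕ × ℕ => y.1 + y.2)]
  · refine Finset.sum_congr rfl fun m hm => ?_
    rw [Finset.mem_range] at hm
    have hfib : {y ∈ {y ∈ Finset.range p ×ˢ Finset.range p | y.1 + y.2 < p} | y.1 + y.2 = m}
        = Finset.HasAntidiagonal.antidiagonal m := by
      ext ⟨i, j⟩
      simp only [Finset.mem_filter, Finset.mem_product, Finset.mem_range,
        Finset.HasAntidiagonal.mem_antidiagonal]
      omega
    rw [hfib, inv_factorial_mul_add_pow p hm, Finset.sum_smul]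
    refine Finset.sum_congr rfl fun y hy => ?_
    rw [Finset.HasAntidiagonal.mem_antidiagonal] at hy
    rw [smul_mul_smul_comm, ← pow_add, hy]
  · intro y hy
    exact Finset.mem_range.2 (Finset.mem_filter.1 hy).2
  · intro y _ hne
    by_contra hlt
    apply hne
    rw [smul_mul_smul_comm, ← pow_add, pow_eq_zero_of_le (not_lt.1 hlt) hx, smul_zero]

lemma Commute.truncExp_truncExp {k : Type*} [Field k] {A : Type*} [Ring A] [Algebra k A]
    (p : ℕ) {x y : A} (h : Commute x y) : Commute (truncExp k p x) (truncExp k p y) :=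
  Commute.sum_left _ _ _ fun i _ => Commute.sum_right _ _ _ fun j _ =>
    ((h.pow_pow i j).smul_left _).smul_right _

lemma prod_ofFn_mul_of_commute {M : Type*} [Monoid M] {r : ℕ} (f g : Fin r → M)
    (h : ∀ i j, Commute (g i) (f j)) :
    (List.ofFn fun i => f i * g i).prod = (List.ofFn f).prod * (List.ofFn g).prod := by
  induction r with
  | zero => simp
  | succ r ih =>
    have hc : Commute (g 0) (List.ofFn fun i : Fin r => f i.succ).prod := by
      refine Commute.list_prod_right _ _ fun y hy => ?_
      obtain ⟨j, rfl⟩ := (List.mem_ofFn' _ _).1 hy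
      exact h 0 j.succ
    simp only [List.ofFn_succ, List.prod_cons]
    rw [ih (fun i => f i.succ) (fun i => g i.succ) fun i j => h i.succ j.succ]
    rw [mul_assoc (f 0), ← mul_assoc (g 0), hc.eq]
    simp only [mul_assoc]


/-- An `r`-tuple of commuting `p`-nilpotent matrices defines a one-parameter additive
subgroup `s ↦ E(s • X₀) * E(s^p • X₁) * ⋯ * E(s^{p^{r-1}} • X_{r-1})` of `GL_n`. -/
theorem commuting_nilpotents_oneParameter {k : Type*} [Field k]
    (p : ℕ) [Fact p.Prime] [CharP k p] (n r : ℕ) (hn : 1 ≤ n) (hr : 1 ≤ r)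
    (X : Fin r → Matrix (Fin n) (Fin n) k)
    (hcomm : ∀ i j, X i * X j = X j * X i) (hX : ∀ i, (X i) ^ p = 0) :
    (∀ s t : k,
      (List.ofFn fun i : Fin r => truncExp k p ((s + t) ^ p ^ (i : ℕ) • X i)).prod
        = (List.ofFn fun i : Fin r => truncExp k p (s ^ p ^ (i : ℕ) • X i)).prod *
          (List.ofFn fun i : Fin r => truncExp k p (t ^ p ^ (i : ℕ) • X i)).prod) ∧
    (List.ofFn fun i : Fin r => truncExp k p ((0 : k) ^ p ^ (i : ℕ) • X i)).prod = 1 ∧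
    (∀ s : k,
      IsUnit (List.ofFn fun i : Fin r => truncExp k p (s ^ p ^ (i : ℕ) • X i)).prod) := by
  have hadd : ∀ s t : k,
      (List.ofFn fun i : Fin r => truncExp k p ((s + t) ^ p ^ (i : ℕ) • X i)).prod
        = (List.ofFn fun i : Fin r => truncExp k p (s ^ p ^ (i : ℕ) • X i)).prod *
          (List.ofFn fun i : Fin r => truncExp k p (t ^ p ^ (i : ℕ) • X i)).prod := by
    intro s t
    rw [← prod_ofFn_mul_of_commute]
    · simp only [add_pow_char_pow, truncExp_add_smul p (hX _)]
    · intro i j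
      have hij : Commute (X i) (X j) := hcomm i j
      exact ((hij.smul_left _).smul_right _).truncExp_truncExp p
  have hzero :
      (List.ofFn fun i : Fin r => truncExp k p ((0 : k) ^ p ^ (i : ℕ) • X i)).prod = 1 := by
    have hp : p ≠ 0 := (Fact.out : p.Prime).ne_zero
    simp [truncExp_zero, hp]
  refine ⟨hadd, hzero, fun s => ?_⟩
  refine isUnit_iff_exists.2
    ⟨(List.ofFn fun i : Fin r => truncExp k p ((-s) ^ p ^ (i : ℕ) • X i)).prod, ?_, ?_⟩
  · rw [← hadd, add_neg_cancel, hzero]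
  · rw [← hadd, neg_add_cancel, hzero]
end

section
/- Let k be an infinite field of prime characteristic p, let n, r ≥ 1, and let (X_0, …, X_{r−1}) and (Y_0, …, Y_{r−1}) be two r-tuples of pairwise commuting n × n matrices over k with X_i^p = 0 and Y_i^p = 0 for all i. If E(s • X_0) * E(s^p • X_1) * ⋯ * E(s^{p^{r−1}} • X_{r−1}) = E(s • Y_0) * E(s^p • Y_1) * ⋯ * E(s^{p^{r−1}} • Y_{r−1}) for every s ∈ k, then X_i = Y_i for all i. (This is the injectivity of the map E_* in Theorem 2.4, for GL_n.) -/
/-- The expansion of the product in powers of `s`, with its coefficients at `0` and at powers of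
`p`. Adding the factor `E(s^{p^r} • X_r)` amounts to adding a leading base-`p` digit to the
exponents; the constant term `1` is what makes the new coefficient at `p^r` equal to `X_r`. -/
lemma exists_coeff_prod_truncExp {k A : Type*} [Field k] [Ring A] [Algebra k A] {p : ℕ}
    (hp : 1 < p) (r : ℕ) (X : Fin r → A) :
    ∃ c : ℕ → A, c 0 = 1 ∧ (∀ j : Fin r, c (p ^ (j : ℕ)) = X j) ∧
      ∀ s : k, (List.ofFn fun i : Fin r => truncExp k p (s ^ p ^ (i : ℕ) • X i)).prod
        = ∑ m ∈ Finset.range (p ^ r), s ^ m • c m := by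
  induction r with
  | zero => exact ⟨fun _ => 1, rfl, fun j => j.elim0, fun s => by simp⟩
  | succ r ih =>
    obtain ⟨c, hc0, hcj, hc⟩ := ih fun i => X i.castSucc
    have hpr : 0 < p ^ r := by positivity
    refine ⟨fun M => c (M % p ^ r) *
      (((M / p ^ r).factorial : k)⁻¹ • X (Fin.last r) ^ (M / p ^ r)), by simp [hc0], ?_, ?_⟩
    · intro j
      refine Fin.lastCases ?_ (fun i => ?_) j
      · simp [Nat.div_self hpr, hc0]
      · have hlt : p ^ (i : ℕ) < p ^ r := Nat.pow_lt_pow_right hp i.2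
        simp [Nat.mod_eq_of_lt hlt, Nat.div_eq_of_lt hlt, hcj]
    · intro s
      rw [List.ofFn_succ', List.concat_eq_append, List.prod_append]
      simp only [Fin.val_castSucc, Fin.val_last, List.prod_singleton]
      rw [hc s, truncExp, Finset.sum_mul_sum, ← Finset.sum_product']
      -- `(m, a) ↦ m + p ^ r * a` appends the leading digit `a` to `m < p ^ r`
      refine Finset.sum_nbij' (fun x => x.1 + p ^ r * x.2) (fun M => (M % p ^ r, M / p ^ r))
        ?_ ?_ ?_ ?_ ?_
      · rintro ⟨m, a⟩ h
        simp only [Finset.mem_product, Finset.mem_range] at h ⊢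
        calc m + p ^ r * a < p ^ r + p ^ r * a := by omega
          _ = p ^ r * (a + 1) := by ring
          _ ≤ p ^ r * p := Nat.mul_le_mul_left _ h.2
          _ = p ^ (r + 1) := (pow_succ _ _).symm
      · intro M h
        simp only [Finset.mem_product, Finset.mem_range] at h ⊢
        exact ⟨Nat.mod_lt _ hpr, Nat.div_lt_of_lt_mul (by rwa [← pow_succ])⟩
      · rintro ⟨m, a⟩ h
        simp only [Finset.mem_product, Finset.mem_range] at h
        simp [Nat.mod_eq_of_lt h.1, Nat.add_mul_div_left _ _ hpr, Nat.div_eq_of_lt h.1]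
      · intro M _
        exact Nat.mod_add_div _ _
      · rintro ⟨m, a⟩ h
        simp only [Finset.mem_product, Finset.mem_range] at h
        simp only [Nat.add_mul_mod_self_left, Nat.mod_eq_of_lt h.1,
          Nat.add_mul_div_left _ _ hpr, Nat.div_eq_of_lt h.1, zero_add, smul_pow,
          smul_mul_assoc, mul_smul_comm, smul_smul]
        congr 1
        ring

lemma coeff_eq_of_forall_sum_smul_eq {k : Type*} [Field k] [Infinite k] {n N : ℕ}
    {c d : ℕ → Matrix (Fin n) (Fin n) k}
    (h : ∀ s : k, ∑ m ∈ Finset.range N, s ^ m • c m = ∑ m ∈ Finset.range N, s ^ m • d m)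
    {m : ℕ} (hm : m < N) : c m = d m := by
  ext a b
  have key : (∑ m ∈ Finset.range N, Polynomial.monomial m (c m a b))
      = ∑ m ∈ Finset.range N, Polynomial.monomial m (d m a b) := by
    refine Polynomial.funext fun s => ?_
    have := congrFun (congrFun (h s) a) b
    simpa [Matrix.sum_apply, Polynomial.eval_finsetSum, mul_comm] using this
  simpa [Polynomial.finsetSum_coeff, Polynomial.coeff_monomial, hm] using
    congrArg (fun q => Polynomial.coeff q m) key

/-- Injectivity of `E_*` for `GL_n`: two `r`-tuples of pairwise commuting `p`-nilpotent
matrices defining the same one-parameter subgroup are equal. -/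
theorem commuting_nilpotents_injective {k : Type*} [Field k] [Infinite k]
    (p : ℕ) [Fact p.Prime] [CharP k p] (n r : ℕ) (hn : 1 ≤ n) (hr : 1 ≤ r)
    (X Y : Fin r → Matrix (Fin n) (Fin n) k)
    (hcommX : ∀ i j, X i * X j = X j * X i) (hcommY : ∀ i j, Y i * Y j = Y j * Y i)
    (hX : ∀ i, (X i) ^ p = 0) (hY : ∀ i, (Y i) ^ p = 0)
    (heq : ∀ s : k,
      (List.ofFn fun i : Fin r => truncExp k p (s ^ p ^ (i : ℕ) • X i)).prod
        = (List.ofFn fun i : Fin r => truncExp k p (s ^ p ^ (i : ℕ) • Y i)).prod) :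
    X = Y := by
  have hp : 1 < p := (Fact.out : p.Prime).one_lt
  obtain ⟨c, -, hcX, hc⟩ := exists_coeff_prod_truncExp (k := k) hp r X
  obtain ⟨d, -, hdY, hd⟩ := exists_coeff_prod_truncExp (k := k) hp r Y
  funext j
  rw [← hcX j, ← hdY j]
  exact coeff_eq_of_forall_sum_smul_eq (fun s => by rw [← hc s, ← hd s, heq s])
    (Nat.pow_lt_pow_right hp j.2)
end

section
/- Let k be a field of characteristic p > 2. The operation (a,b)·(c,d) = (a+c, b+d+(1/2)(a^p c − a c^p)) makes the set k × k into a group with identity element (0,0) and with the inverse of (a,b) equal to (−a,−b). Moreover, if there exists a ∈ k with a^p ≠ a (for instance if k is algebraically closed), then this group is nonabelian. -/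
/-!
The map `(a, c) ↦ (1/2)(aᵖc − acᵖ)` is biadditive, because Frobenius is additive in
characteristic `p`, hence a 2-cocycle, which gives associativity. It is also alternating, so
that `(−a, −b)` inverts `(a, b)`. The commutator of `(a, 0)` and `(1, 0)` is `(0, aᵖ − a)`.
-/

/-- The fake Heisenberg group law `(a,b)·(c,d) = (a+c, b+d+(1/2)(aᵖc − acᵖ))` makes
`k × k` into a group with identity `(0,0)` and inverse `(a,b) ↦ (−a,−b)`, which is
nonabelian as soon as some `a ∈ k` satisfies `aᵖ ≠ a`. -/
theorem fakeHeisenberg_group {k : Type*} [Field k] (p : ℕ) [Fact p.Prime] [CharP k p]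
    (hp : 2 < p) :
    let mul : k × k → k × k → k × k := fun x y =>
      (x.1 + y.1, x.2 + y.2 + (1 / 2 : k) * (x.1 ^ p * y.1 - x.1 * y.1 ^ p))
    (∀ x y z : k × k, mul (mul x y) z = mul x (mul y z)) ∧
    (∀ x : k × k, mul ((0 : k), (0 : k)) x = x) ∧
    (∀ x : k × k, mul x ((0 : k), (0 : k)) = x) ∧
    (∀ x : k × k, mul x (-x.1, -x.2) = ((0 : k), (0 : k))) ∧
    (∀ x : k × k, mul (-x.1, -x.2) x = ((0 : k), (0 : k))) ∧
    ((∃ a : k, a ^ p ≠ a) → ∃ x y : k × k, mul x y ≠ mul y x) := by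
  have hp0 : p ≠ 0 := by omega
  have hodd : Odd p := (Fact.out : p.Prime).odd_of_ne_two (by omega)
  have h2 : (2 : k) ≠ 0 := Ring.two_ne_zero (by rw [ringChar.eq k p]; omega)
  intro mul
  refine ⟨fun x y z => ?_, fun x => ?_, fun x => ?_, fun x => ?_, fun x => ?_, ?_⟩
  · refine Prod.ext (add_assoc _ _ _) ?_
    -- Additivity of Frobenius makes the cocycle biadditive.
    simp only [mul, add_pow_char]
    ring
  · simp [mul, hp0]
  · simp [mul, hp0]
  · refine Prod.ext (add_neg_cancel _) ?_
    simp only [mul, hodd.neg_pow]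
    ring
  · refine Prod.ext (neg_add_cancel _) ?_
    simp only [mul, hodd.neg_pow]
    ring
  · rintro ⟨a, ha⟩
    -- The commutator of `(a, 0)` and `(1, 0)` is `(0, aᵖ - a)`.
    refine ⟨(a, 0), (1, 0), fun h => ha ?_⟩
    have h' := congrArg Prod.snd h
    simp only [mul, one_pow] at h'
    field_simp at h'
    have h3 : (2 : k) * (a ^ p - a) = 0 := by linear_combination h'
    exact sub_eq_zero.mp ((mul_eq_zero.mp h3).resolve_left h2)
end

section
/- Let k be a field of prime characteristic p, let r ≥ 1, and let A = k[t]/(t^{p^r}) be the truncated polynomial ring. If u ∈ A lies in the ideal generated by (the image of) t and satisfies u^p ⊗ u = u ⊗ u^p in the tensor product A ⊗_k A, then u^p = 0. (This is the key computation in the fake Heisenberg example showing that f(X^p) = 0 for any Hopf algebra map f : k[H] → k[t]/(t^{p^r}).) -/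
/-!
Since `t` is nilpotent in `A`, so is `u`. If `u ≠ 0`, contracting the second tensor factor with a
linear functional `φ` such that `φ u ≠ 0` turns the hypothesis into `φ u • u ^ p = φ (u ^ p) • u`.
If `φ (u ^ p) = 0`, this gives `u ^ p = 0`. Otherwise `u = d • u ^ p` for a scalar `d`, that is,
`(1 - d • u ^ (p - 1)) * u = 0`; the first factor is a unit because `u` is nilpotent and `p ≥ 2`,
so `u = 0`, a contradiction.
-/

open TensorProduct

/-- In `A = k[t]/(t^{p^r})`, if `u` lies in the ideal generated by `t` and
`u^p ⊗ u = u ⊗ u^p` in `A ⊗[k] A`, then `u^p = 0`. -/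
theorem pow_p_eq_zero_of_tmul_symm {k : Type*} [Field k]
    (p : ℕ) [Fact p.Prime] [CharP k p] (r : ℕ) (hr : 1 ≤ r)
    (u : Polynomial k ⧸ Ideal.span {(Polynomial.X : Polynomial k) ^ p ^ r})
    (hu : u ∈ Ideal.span
      {Ideal.Quotient.mk (Ideal.span {(Polynomial.X : Polynomial k) ^ p ^ r})
        Polynomial.X})
    (h : (u ^ p) ⊗ₜ[k] u = u ⊗ₜ[k] (u ^ p)) :
    u ^ p = 0 := by
  have hp : 2 ≤ p := (Fact.out : p.Prime).two_le
  have hnil : IsNilpotent u := by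
    obtain ⟨a, rfl⟩ := Ideal.mem_span_singleton'.mp hu
    refine ⟨p ^ r, ?_⟩
    rw [mul_pow, ← map_pow, Ideal.Quotient.eq_zero_iff_mem.mpr
      (Ideal.mem_span_singleton_self _), mul_zero]
  by_cases hu0 : u = 0
  · rw [hu0, zero_pow (by omega)]
  obtain ⟨φ, hφ⟩ : ∃ φ : Module.Dual k
      (Polynomial k ⧸ Ideal.span {(Polynomial.X : Polynomial k) ^ p ^ r}), φ u ≠ 0 := by
    by_contra! hc
    exact hu0 ((Module.forall_dual_apply_eq_zero_iff k u).mp hc)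
  have key : φ u • u ^ p = φ (u ^ p) • u := by
    simpa using congrArg (fun z => TensorProduct.rid k _ (LinearMap.lTensor _ φ z)) h
  by_cases hc : φ (u ^ p) = 0
  · rw [hc, zero_smul] at key
    exact (smul_eq_zero.mp key).resolve_left hφ
  exfalso
  have hd : u = ((φ (u ^ p))⁻¹ * φ u) • u ^ p := by
    rw [mul_smul, key, inv_smul_smul₀ hc]
  have hunit : IsUnit (1 - ((φ (u ^ p))⁻¹ * φ u) • u ^ (p - 1)) :=
    ((hnil.pow_of_pos (by omega)).smul _).isUnit_one_sub
  refine hu0 (hunit.mul_right_eq_zero.mp ?_)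
  rw [sub_mul, one_mul, smul_mul_assoc, ← pow_succ, Nat.sub_add_cancel (by omega), ← hd, sub_self]
end

section
/- Let k be a field of characteristic p > 2 and let f₁, f₂ ∈ k[X] be polynomials with f₁(0) = 0 and f₂(0) = 0 such that, as identities in the polynomial ring k[X,Y]: f₁(X+Y) = f₁(X) + f₁(Y) and f₂(X+Y) = f₂(X) + f₂(Y) + (1/2)(f₁(X)^p f₁(Y) − f₁(X) f₁(Y)^p). Then f₁ = 0, and consequently f₂ is additive: f₂(X+Y) = f₂(X) + f₂(Y). (Hence every polynomial group homomorphism from the additive group of k into the fake Heisenberg group has trivial first coordinate and additive second coordinate.) -/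
/-! The left side `f₂(X+Y)` and the sum `f₂(X) + f₂(Y)` are symmetric in `X` and `Y`, whereas
`(1/2)(f₁(X)^p f₁(Y) − f₁(X) f₁(Y)^p)` is antisymmetric. As the characteristic is not `2`, this
term vanishes, so `f₁(X)^p f₁(Y) = f₁(X) f₁(Y)^p`. If `f₁ ≠ 0`, comparing degrees in `Y` gives
`deg f₁ = p · deg f₁`; hence `f₁` is constant, and `f₁(0) = 0` is contradicted. -/

/-- Every polynomial group homomorphism `s ↦ (f₁(s), f₂(s))` from the additive group of
`k` (char `p > 2`) into the fake Heisenberg group has trivial first coordinate and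
additive second coordinate: if `f₁(X+Y) = f₁(X) + f₁(Y)` and
`f₂(X+Y) = f₂(X) + f₂(Y) + (1/2)(f₁(X)^p f₁(Y) − f₁(X) f₁(Y)^p)` in `k[X][Y]`, with
`f₁(0) = f₂(0) = 0`, then `f₁ = 0` and `f₂` is additive. -/
theorem fakeHeisenberg_hom_trivial {k : Type*} [Field k]
    (p : ℕ) [Fact p.Prime] [CharP k p] (hp : 2 < p) (f₁ f₂ : Polynomial k)
    (h₁0 : f₁.eval 0 = 0) (h₂0 : f₂.eval 0 = 0)
    (h₁ : Polynomial.aeval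
        ((Polynomial.C Polynomial.X + Polynomial.X : Polynomial (Polynomial k))) f₁
      = Polynomial.aeval ((Polynomial.C Polynomial.X : Polynomial (Polynomial k))) f₁
        + Polynomial.aeval ((Polynomial.X : Polynomial (Polynomial k))) f₁)
    (h₂ : Polynomial.aeval
        ((Polynomial.C Polynomial.X + Polynomial.X : Polynomial (Polynomial k))) f₂
      = Polynomial.aeval ((Polynomial.C Polynomial.X : Polynomial (Polynomial k))) f₂
        + Polynomial.aeval ((Polynomial.X : Polynomial (Polynomial k))) f₂
        + Polynomial.C (Polynomial.C (1 / 2 : k)) *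
          ((Polynomial.aeval ((Polynomial.C Polynomial.X : Polynomial (Polynomial k))) f₁) ^ p
              * Polynomial.aeval ((Polynomial.X : Polynomial (Polynomial k))) f₁
            - Polynomial.aeval ((Polynomial.C Polynomial.X : Polynomial (Polynomial k))) f₁
              * (Polynomial.aeval ((Polynomial.X : Polynomial (Polynomial k))) f₁) ^ p)) :
    f₁ = 0 ∧
    Polynomial.aeval
        ((Polynomial.C Polynomial.X + Polynomial.X : Polynomial (Polynomial k))) f₂
      = Polynomial.aeval ((Polynomial.C Polynomial.X : Polynomial (Polynomial k))) f₂
        + Polynomial.aeval ((Polynomial.X : Polynomial (Polynomial k))) f₂ := by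
  -- Exchange of the two variables turns the cocycle into its negative.
  have hs := congrArg (Polynomial.Bivariate.swap (R := k)) h₂
  simp only [map_add, map_sub, map_mul, map_pow, ← Polynomial.aeval_algHom_apply,
    Polynomial.Bivariate.swap_X, Polynomial.Bivariate.swap_Y,
    Polynomial.Bivariate.swap_C_C] at hs
  rw [add_comm (Polynomial.X : Polynomial (Polynomial k)) (Polynomial.C Polynomial.X), h₂] at hs
  have hBA : Polynomial.aeval (Polynomial.C Polynomial.X : Polynomial (Polynomial k)) f₁
      = Polynomial.C f₁ := by
    have := Polynomial.aeval_algHom_apply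
      (Algebra.ofId (Polynomial k) (Polynomial (Polynomial k)) |>.restrictScalars k)
      (Polynomial.X : Polynomial k) f₁
    simpa [Algebra.ofId_apply] using this
  have hY : Polynomial.aeval (Polynomial.X : Polynomial (Polynomial k)) f₁
      = f₁.map Polynomial.C := by
    rw [Polynomial.aeval_def]
    rfl
  have h2 : (2 : k) ≠ 0 := Ring.two_ne_zero (by rw [ringChar.eq k p]; omega)
  have hhalf : (Polynomial.C (Polynomial.C (1 / 2 : k)) : Polynomial (Polynomial k)) * 2 = 1 := by
    rw [show (2 : Polynomial (Polynomial k)) = Polynomial.C (Polynomial.C 2) from rfl,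
      ← Polynomial.C_mul, ← Polynomial.C_mul, one_div, inv_mul_cancel₀ h2]
    simp
  have key : Polynomial.C f₁ ^ p * f₁.map Polynomial.C
      = Polynomial.C f₁ * (f₁.map Polynomial.C) ^ p := by
    rw [hBA, hY] at hs
    linear_combination hs - (Polynomial.C f₁ ^ p * f₁.map Polynomial.C
      - Polynomial.C f₁ * (f₁.map Polynomial.C) ^ p) * hhalf
  have hf : f₁ = 0 := by
    by_contra hne
    -- Compare degrees in the second variable.
    have hd := congrArg Polynomial.natDegree key
    rw [← Polynomial.C_pow, Polynomial.natDegree_C_mul (pow_ne_zero _ hne),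
      Polynomial.natDegree_C_mul hne, Polynomial.natDegree_pow,
      Polynomial.natDegree_map_eq_of_injective Polynomial.C_injective] at hd
    have h0 : f₁.natDegree = 0 := by nlinarith
    rw [Polynomial.eq_C_of_natDegree_eq_zero h0] at h₁0 hne
    simp_all
  refine ⟨hf, ?_⟩
  rw [h₂, hf]
  simp
end
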